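/- Let 0 ≤ s < 1 and 1/(2-s) ≤ q < 1, and let Φ : M_m(ℂ) → M_n(ℂ) be a sesquiunital Schwarz map. Then for all positive definite A ∈ M_n(ℂ) and all invertible B ∈ M_n(ℂ): (n/m)^{(2-s)q - 1} tr[(B* A^{-s} B)^q] ≥ tr[(Φ†(B)* Φ†(A)^{-s} Φ†(B))^q]. -/

import Mathlib

open Matrix
open scoped ComplexOrder

/-- Real power of a matrix, defined spectrally for Hermitian matrices (junk value `0` otherwise). -/
noncomputable def mpow {k : ℕ} (A : Matrix (Fin k) (Fin k) ℂ) (p : ℝ) : Matrix (Fin k) (Fin k) ℂ :=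
  if hA : A.IsHermitian then
    (hA.eigenvectorUnitary : Matrix (Fin k) (Fin k) ℂ) *
      Matrix.diagonal (fun i => ((hA.eigenvalues i ^ p : ℝ) : ℂ)) *
      (hA.eigenvectorUnitary : Matrix (Fin k) (Fin k) ℂ)ᴴ
  else 0

/-- A Schwarz map: `Φ(K*K) ≥ Φ(K)*Φ(K)` for all `K`. -/
def IsSchwarz {a b : ℕ} (Φ : Matrix (Fin a) (Fin a) ℂ →ₗ[ℂ] Matrix (Fin b) (Fin b) ℂ) : Prop :=
  ∀ K, (Φ (Kᴴ * K) - (Φ K)ᴴ * Φ K).PosSemidef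

/-- A positive map: sends positive semidefinite matrices to positive semidefinite matrices. -/
def IsPositiveMap {a b : ℕ} (Φ : Matrix (Fin a) (Fin a) ℂ →ₗ[ℂ] Matrix (Fin b) (Fin b) ℂ) : Prop :=
  ∀ X, X.PosSemidef → (Φ X).PosSemidef

/-- `Ψ` is the Hilbert–Schmidt adjoint of `Φ`: `⟨X, Φ Y⟩ = ⟨Ψ X, Y⟩`. -/
def IsHSAdjoint {a b : ℕ} (Φ : Matrix (Fin a) (Fin a) ℂ →ₗ[ℂ] Matrix (Fin b) (Fin b) ℂ)
    (Ψ : Matrix (Fin b) (Fin b) ℂ →ₗ[ℂ] Matrix (Fin a) (Fin a) ℂ) : Prop :=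
  ∀ X Y, (Xᴴ * Φ Y).trace = ((Ψ X)ᴴ * Y).trace

/- Let `Ψ(1) ≤ c`. The inequality
`tr (Φ(K)* A^s Φ(K) Z^r) ≤ c^(1 - s - r) tr (K* Ψ(A)^s K Ψ(Z)^r)` follows from the
Schwarz inequality for `(s, r) = (0, 0), (1, 0), (0, 1)`, hence by interpolation whenever
`s, r ≥ 0` and `s + r ≤ 1`. By duality of quadratic forms it becomes
`tr (Ψ(B)* Ψ(A)^(-s) Ψ(B) Ψ(Z)^(-r)) ≤ c^(1 - s - r) tr (B* A^(-s) B Z^(-r))`. The power `q`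
enters through `tr X^q = inf_Z (q tr (X Z^(-r)) + (1 - q) tr Z)` with `r = 1 / q - 1`,
together with `tr Ψ(Z) ≤ tr Z`. -/

section Interpolation

lemma norm_le_of_norm_le_re {E : Type*} [NormedAddCommGroup E] [NormedSpace ℂ E] {f : ℂ → E}
    {g : ℝ → ℝ} {C : ℝ} (hf : Differentiable ℂ f) (hg : Continuous g)
    (hfg : ∀ z, ‖f z‖ ≤ g z.re) (h₀ : ∀ z : ℂ, z.re = 0 → ‖f z‖ ≤ C)
    (h₁ : ∀ z : ℂ, z.re = 1 → ‖f z‖ ≤ C) {z : ℂ} (hz₀ : 0 ≤ z.re) (hz₁ : z.re ≤ 1) :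
    ‖f z‖ ≤ C := by
  obtain ⟨M, hM⟩ := (isCompact_Icc (a := (0 : ℝ)) (b := 1)).bddAbove_image hg.continuousOn
  refine PhragmenLindelof.vertical_strip hf.diffContOnCl ⟨0, by positivity, 0, ?_⟩ h₀ h₁ hz₀ hz₁
  refine .of_bound M (Filter.eventually_inf_principal.2 (.of_forall fun w hw => ?_))
  simpa using (hfg w).trans (hM ⟨w.re, Set.Ioo_subset_Icc_self hw, rfl⟩)

lemma norm_sq_cpow_mul_cpow {x y : ℝ} (hx : 0 < x) (hy : 0 < y) (a b : ℂ) :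
    ‖(x : ℂ) ^ (a / 2) * (y : ℂ) ^ (b / 2)‖ ^ 2 = x ^ a.re * y ^ b.re := by
  rw [norm_mul, mul_pow, Complex.norm_cpow_eq_rpow_re_of_pos hx,
    Complex.norm_cpow_eq_rpow_re_of_pos hy, ← Real.rpow_mul_natCast hx.le,
    ← Real.rpow_mul_natCast hy.le]
  simp [Complex.div_ofNat_re]

lemma differentiable_cpow_mul_cpow {x y : ℝ} (hx : 0 < x) (hy : 0 < y) {a b : ℂ → ℂ}
    (ha : Differentiable ℂ a) (hb : Differentiable ℂ b) :
    Differentiable ℂ fun z => (x : ℂ) ^ a z * (y : ℂ) ^ b z := by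
  have hx' := Complex.ofReal_ne_zero.2 hx.ne'
  have hy' := Complex.ofReal_ne_zero.2 hy.ne'
  fun_prop (disch := simp [*])

variable {ι κ : Type*} [Fintype ι]

lemma sum_norm_sq_mul_apply_le [Finite κ] (T : (κ → ℂ) →ₗ[ℂ] ι → ℂ) {φ : ℂ → ι → ℂ} {ψ : ℂ → κ → ℂ}
    (hφ : Differentiable ℂ φ) (hψ : Differentiable ℂ ψ) (hφ_re : ∀ z i, ‖φ z i‖ = ‖φ z.re i‖)
    (hψ_re : ∀ z k, ‖ψ z k‖ = ‖ψ z.re k‖) {C : ℝ}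
    (h₀ : ∀ z : ℂ, z.re = 0 → ∑ i, ‖φ z i * T (ψ z) i‖ ^ 2 ≤ C)
    (h₁ : ∀ z : ℂ, z.re = 1 → ∑ i, ‖φ z i * T (ψ z) i‖ ^ 2 ≤ C)
    {z : ℂ} (hz₀ : 0 ≤ z.re) (hz₁ : z.re ≤ 1) :
    ∑ i, ‖φ z i * T (ψ z) i‖ ^ 2 ≤ C := by
  have := Fintype.ofFinite κ
  let L := LinearMap.toContinuousLinearMap T
  let f (z : ℂ) : EuclideanSpace ℂ ι := WithLp.toLp 2 fun i => φ z i * T (ψ z) i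
  have hf : Differentiable ℂ f := (differentiable_piLp 2).2 fun i =>
    (differentiable_pi.1 hφ i).mul (differentiable_pi.1 (L.differentiable.comp hψ) i)
  have hf_norm (z : ℂ) : ‖f z‖ = √(∑ i, ‖φ z i * T (ψ z) i‖ ^ 2) := EuclideanSpace.norm_eq _
  have hψ_norm (z : ℂ) : ‖ψ z‖ = ‖ψ z.re‖ := by
    simp only [Pi.norm_def, ← norm_toNNReal, hψ_re z]
  have hC : 0 ≤ C := (Finset.sum_nonneg fun _ _ => sq_nonneg _).trans (h₀ 0 rfl)
  suffices h : ‖f z‖ ≤ √C by rwa [hf_norm, Real.sqrt_le_sqrt_iff hC] at h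
  refine norm_le_of_norm_le_re (g := fun u => √(∑ i, (‖φ u i‖ * (‖L‖ * ‖ψ u‖)) ^ 2)) hf ?_
    (fun z => ?_) (fun z hz => ?_) (fun z hz => ?_) hz₀ hz₁
  · have := hφ.continuous
    have := hψ.continuous
    fun_prop
  · rw [hf_norm]
    gcongr with i
    rw [norm_mul, ← hφ_re, ← hψ_norm]
    gcongr
    exact (norm_le_pi_norm _ i).trans (L.le_opNorm _)
  · exact (hf_norm z).trans_le (Real.sqrt_le_sqrt (h₀ z hz))
  · exact (hf_norm z).trans_le (Real.sqrt_le_sqrt (h₁ z hz))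

variable [Fintype κ]

/- Stein–Weiss interpolation with change of measure: a factor in the argument of `T` compensates
the target weights, so that on both edges of the strip the bound is the claimed right-hand side. -/
lemma sum_rpow_mul_rpow_mul_norm_sq_le (T : (κ → ℂ) →ₗ[ℂ] ι → ℂ) {x₀ x₁ : ι → ℝ} {y₀ y₁ : κ → ℝ}
    (hx₀ : ∀ i, 0 < x₀ i) (hx₁ : ∀ i, 0 < x₁ i) (hy₀ : ∀ k, 0 < y₀ k) (hy₁ : ∀ k, 0 < y₁ k)
    (h₀ : ∀ v, ∑ i, x₀ i * ‖T v i‖ ^ 2 ≤ ∑ k, y₀ k * ‖v k‖ ^ 2)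
    (h₁ : ∀ v, ∑ i, x₁ i * ‖T v i‖ ^ 2 ≤ ∑ k, y₁ k * ‖v k‖ ^ 2)
    {t : ℝ} (ht₀ : 0 ≤ t) (ht₁ : t ≤ 1) (v : κ → ℂ) :
    ∑ i, x₀ i ^ (1 - t) * x₁ i ^ t * ‖T v i‖ ^ 2 ≤
      ∑ k, y₀ k ^ (1 - t) * y₁ k ^ t * ‖v k‖ ^ 2 := by
  let φ (z : ℂ) (i : ι) : ℂ := (x₀ i : ℂ) ^ ((1 - z) / 2) * (x₁ i : ℂ) ^ (z / 2)
  let ψ (z : ℂ) (k : κ) : ℂ := (y₀ k : ℂ) ^ ((z - t) / 2) * (y₁ k : ℂ) ^ ((t - z) / 2) * v k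
  have hφ (z : ℂ) (i : ι) : ‖φ z i‖ ^ 2 = x₀ i ^ (1 - z.re) * x₁ i ^ z.re := by
    simp only [φ, norm_sq_cpow_mul_cpow (hx₀ i) (hx₁ i), Complex.sub_re, Complex.one_re]
  have hψ (z : ℂ) (k : κ) : ‖ψ z k‖ ^ 2 = y₀ k ^ (z.re - t) * y₁ k ^ (t - z.re) * ‖v k‖ ^ 2 := by
    simp only [ψ, norm_mul _ (v k), mul_pow, norm_sq_cpow_mul_cpow (hy₀ k) (hy₁ k), Complex.sub_re,
      Complex.ofReal_re]
  have key := sum_norm_sq_mul_apply_le T (φ := φ) (ψ := ψ) (z := t)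
    (C := ∑ k, y₀ k ^ (1 - t) * y₁ k ^ t * ‖v k‖ ^ 2)
    (differentiable_pi.2 fun i =>
      differentiable_cpow_mul_cpow (hx₀ i) (hx₁ i) (by fun_prop) (by fun_prop))
    (differentiable_pi.2 fun k =>
      (differentiable_cpow_mul_cpow (hy₀ k) (hy₁ k) (by fun_prop) (by fun_prop)).mul_const _)
    (fun z i => by rw [← sq_eq_sq₀ (norm_nonneg _) (norm_nonneg _), hφ, hφ, Complex.ofReal_re])
    (fun z k => by rw [← sq_eq_sq₀ (norm_nonneg _) (norm_nonneg _), hψ, hψ, Complex.ofReal_re])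
    (fun z hz => ?_) (fun z hz => ?_) ht₀ ht₁
  · have hψt : ψ t = v := by simp [ψ]
    simpa only [norm_mul, mul_pow, hφ, hψt, Complex.ofReal_re] using key
  · have hx := h₀ (ψ z)
    simp only [norm_mul, mul_pow, hφ, hψ, hz, sub_zero, Real.rpow_one, Real.rpow_zero,
      mul_one, zero_sub] at hx ⊢
    refine hx.trans_eq (Finset.sum_congr rfl fun k _ => ?_)
    rw [sub_eq_add_neg, Real.rpow_add (hy₀ k), Real.rpow_one]
    ring
  · have hx := h₁ (ψ z)
    simp only [norm_mul, mul_pow, hφ, hψ, hz, sub_self, Real.rpow_one, Real.rpow_zero,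
      one_mul] at hx ⊢
    refine hx.trans_eq (Finset.sum_congr rfl fun k _ => ?_)
    rw [Real.rpow_sub_one (hy₁ k).ne']
    have := (hy₁ k).ne'
    field_simp

lemma prod_rpow_rpow_mul_prod_rpow_rpow {δ : Type*} [Fintype δ] {a : δ → ℝ} (ha : ∀ j, 0 < a j)
    (u v : δ → ℝ) (s t : ℝ) :
    (∏ j, a j ^ u j) ^ s * (∏ j, a j ^ v j) ^ t = ∏ j, a j ^ (s • u + t • v) j := by
  have h (w : δ → ℝ) (j : δ) : 0 ≤ a j ^ w j := Real.rpow_nonneg (ha j).le _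
  rw [← Real.finsetProd_rpow _ _ fun j _ => h u j, ← Real.finsetProd_rpow _ _ fun j _ => h v j,
    ← Finset.prod_mul_distrib]
  refine Finset.prod_congr rfl fun j _ => ?_
  rw [← Real.rpow_mul (ha j).le, ← Real.rpow_mul (ha j).le, ← Real.rpow_add (ha j), mul_comm (u j),
    mul_comm (v j)]
  rfl

lemma convex_setOf_sum_prod_rpow_mul_norm_sq_le {δ : Type*} [Fintype δ]
    (T : (κ → ℂ) →ₗ[ℂ] ι → ℂ) {a : ι → δ → ℝ} {b : κ → δ → ℝ} (ha : ∀ i j, 0 < a i j)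
    (hb : ∀ k j, 0 < b k j) :
    Convex ℝ {u : δ → ℝ | ∀ v, ∑ i, (∏ j, a i j ^ u j) * ‖T v i‖ ^ 2 ≤
      ∑ k, (∏ j, b k j ^ u j) * ‖v k‖ ^ 2} := by
  refine convex_iff_forall_pos.2 fun u₀ h₀ u₁ h₁ s t _ ht hst v => ?_
  obtain rfl : s = 1 - t := by linarith
  have ha_prod (u : δ → ℝ) (i : ι) : 0 < ∏ j, a i j ^ u j :=
    Finset.prod_pos fun j _ => Real.rpow_pos_of_pos (ha i j) _
  have hb_prod (u : δ → ℝ) (k : κ) : 0 < ∏ j, b k j ^ u j :=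
    Finset.prod_pos fun j _ => Real.rpow_pos_of_pos (hb k j) _
  simpa only [prod_rpow_rpow_mul_prod_rpow_rpow (ha _), prod_rpow_rpow_mul_prod_rpow_rpow (hb _)]
    using sum_rpow_mul_rpow_mul_norm_sq_le T (ha_prod u₀) (ha_prod u₁) (hb_prod u₀) (hb_prod u₁)
      h₀ h₁ ht.le (by linarith) v

end Interpolation

section Spectral

variable {ι ι' : Type*} [Fintype ι] [DecidableEq ι] [Fintype ι'] [DecidableEq ι']

/-- The coordinates of a matrix in the orthonormal basis of rank one matrices `uᵢ vⱼᴴ` built from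
the columns of two unitary matrices. -/
def unitaryCoord (U : unitaryGroup ι ℂ) (V : unitaryGroup ι' ℂ) :
    Matrix ι ι' ℂ ≃ₗ[ℂ] (ι × ι' → ℂ) where
  toFun Y p := ((U : Matrix ι ι ℂ)ᴴ * Y * (V : Matrix ι' ι' ℂ)) p.1 p.2
  invFun v := (U : Matrix ι ι ℂ) * of (fun i j => v (i, j)) * (V : Matrix ι' ι' ℂ)ᴴ
  map_add' Y Y' := by ext; simp [Matrix.mul_add, Matrix.add_mul]
  map_smul' a Y := by ext; simp
  left_inv Y := by
    have hU : (U : Matrix ι ι ℂ) * (U : Matrix ι ι ℂ)ᴴ = 1 := Unitary.coe_mul_star_self U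
    have hV : (V : Matrix ι' ι' ℂ) * (V : Matrix ι' ι' ℂ)ᴴ = 1 := Unitary.coe_mul_star_self V
    change (U : Matrix ι ι ℂ) * ((U : Matrix ι ι ℂ)ᴴ * Y * (V : Matrix ι' ι' ℂ)) *
      (V : Matrix ι' ι' ℂ)ᴴ = Y
    simp only [← Matrix.mul_assoc, hU, Matrix.one_mul]
    rw [Matrix.mul_assoc, hV, Matrix.mul_one]
  right_inv v := by
    have hU : (U : Matrix ι ι ℂ)ᴴ * (U : Matrix ι ι ℂ) = 1 := Unitary.coe_star_mul_self U
    have hV : (V : Matrix ι' ι' ℂ)ᴴ * (V : Matrix ι' ι' ℂ) = 1 := Unitary.coe_star_mul_self V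
    ext p
    simp only [← Matrix.mul_assoc, hU, Matrix.one_mul]
    rw [Matrix.mul_assoc, hV, Matrix.mul_one, of_apply]

lemma trace_conjTranspose_mul_diagonal_mul_mul_diagonal (G : Matrix ι ι' ℂ) (a : ι → ℝ)
    (b : ι' → ℝ) :
    (Gᴴ * diagonal (fun i => (a i : ℂ)) * G * diagonal (fun j => (b j : ℂ))).trace =
      ((∑ p : ι × ι', a p.1 * b p.2 * ‖G p.1 p.2‖ ^ 2 : ℝ) : ℂ) := by
  simp only [trace, diag_apply, mul_diagonal, Matrix.mul_apply (N := G), conjTranspose_apply]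
  rw [Fintype.sum_prod_type_right]
  push_cast
  simp only [Finset.sum_mul, ← Complex.conj_mul', RCLike.star_def]
  exact Finset.sum_congr rfl fun j _ => Finset.sum_congr rfl fun i _ => by ring

lemma cfc_eq_mul_diagonal_mul {A : Matrix ι ι ℂ} (hA : A.IsHermitian) (f : ℝ → ℝ) :
    cfc f A = (hA.eigenvectorUnitary : Matrix ι ι ℂ) *
      diagonal (fun i => (f (hA.eigenvalues i) : ℂ)) *
      (hA.eigenvectorUnitary : Matrix ι ι ℂ)ᴴ := by
  rw [hA.cfc_eq]
  rfl

lemma trace_conjTranspose_mul_cfc_mul_mul_cfc {A : Matrix ι ι ℂ} {Z : Matrix ι' ι' ℂ}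
    (hA : A.IsHermitian) (hZ : Z.IsHermitian) (f g : ℝ → ℝ) (Y : Matrix ι ι' ℂ) :
    (Yᴴ * cfc f A * Y * cfc g Z).trace =
      ((∑ p : ι × ι', f (hA.eigenvalues p.1) * g (hZ.eigenvalues p.2) *
        ‖unitaryCoord hA.eigenvectorUnitary hZ.eigenvectorUnitary Y p‖ ^ 2 : ℝ) : ℂ) := by
  rw [cfc_eq_mul_diagonal_mul hA, cfc_eq_mul_diagonal_mul hZ, ← Matrix.mul_assoc, trace_mul_comm]
  refine Eq.trans ?_ (trace_conjTranspose_mul_diagonal_mul_mul_diagonal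
    ((hA.eigenvectorUnitary : Matrix ι ι ℂ)ᴴ * Y * (hZ.eigenvectorUnitary : Matrix ι' ι' ℂ))
    (f ∘ hA.eigenvalues) (g ∘ hZ.eigenvalues))
  simp only [conjTranspose_mul, conjTranspose_conjTranspose, Matrix.mul_assoc, Function.comp_apply]

lemma trace_cfc {A : Matrix ι ι ℂ} (hA : A.IsHermitian) (f : ℝ → ℝ) :
    (cfc f A).trace = ((∑ i, f (hA.eigenvalues i) : ℝ) : ℂ) := by
  simp [hA.cfc_eq, IsHermitian.cfc, Unitary.conjStarAlgAut_apply, trace_mul_cycle, trace_diagonal]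

open scoped MatrixOrder

lemma mpow_eq_rpow {k : ℕ} {A : Matrix (Fin k) (Fin k) ℂ} (hA : A.PosSemidef) (p : ℝ) :
    mpow A p = A ^ p := by
  rw [CFC.rpow_eq_cfc_real hA.nonneg, hA.1.cfc_eq, mpow, dif_pos hA.1]
  rfl

lemma zero_mpow {k : ℕ} {p : ℝ} (hp : p ≠ 0) : mpow (0 : Matrix (Fin k) (Fin k) ℂ) p = 0 :=
  (mpow_eq_rpow .zero p).trans (CFC.zero_rpow hp)

lemma posDef_rpow {A : Matrix ι ι ℂ} (hA : A.PosDef) (p : ℝ) : (A ^ p).PosDef :=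
  (IsStrictlyPositive.rpow A p hA.isStrictlyPositive).posDef

lemma inv_rpow {A : Matrix ι ι ℂ} (hA : A.PosDef) (p : ℝ) : (A ^ p)⁻¹ = A ^ (-p) :=
  inv_eq_right_inv (CFC.rpow_mul_rpow_neg p hA.isStrictlyPositive)

lemma trace_rpow {A : Matrix ι ι ℂ} (hA : A.PosSemidef) (p : ℝ) :
    (A ^ p).trace = ((∑ i, hA.1.eigenvalues i ^ p : ℝ) : ℂ) := by
  rw [CFC.rpow_eq_cfc_real hA.nonneg, trace_cfc hA.1]

lemma trace_conjTranspose_mul_rpow_mul_mul_rpow {A : Matrix ι ι ℂ} {Z : Matrix ι' ι' ℂ}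
    (hA : A.PosSemidef) (hZ : Z.PosSemidef) (s r : ℝ) (Y : Matrix ι ι' ℂ) :
    (Yᴴ * A ^ s * Y * Z ^ r).trace.re = ∑ p : ι × ι', hA.1.eigenvalues p.1 ^ s *
      hZ.1.eigenvalues p.2 ^ r *
      ‖unitaryCoord hA.1.eigenvectorUnitary hZ.1.eigenvectorUnitary Y p‖ ^ 2 := by
  rw [CFC.rpow_eq_cfc_real hA.nonneg, CFC.rpow_eq_cfc_real hZ.nonneg,
    trace_conjTranspose_mul_cfc_mul_mul_cfc hA.1 hZ.1, Complex.ofReal_re]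

end Spectral

section TraceInequality

open scoped MatrixOrder

variable {ι ι' κ κ' : Type*} [Fintype ι] [DecidableEq ι] [Fintype ι'] [DecidableEq ι']
  [Fintype κ] [DecidableEq κ] [Fintype κ'] [DecidableEq κ']

theorem convex_setOf_trace_mul_rpow_le (T : Matrix κ κ' ℂ →ₗ[ℂ] Matrix ι ι' ℂ)
    {A : Matrix ι ι ℂ} {Z : Matrix ι' ι' ℂ} {A' : Matrix κ κ ℂ} {Z' : Matrix κ' κ' ℂ}
    (hA : A.PosDef) (hZ : Z.PosDef) (hA' : A'.PosDef) (hZ' : Z'.PosDef) {c : ℝ} (hc : 0 < c) :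
    Convex ℝ {u : Fin 3 → ℝ | ∀ K, ((T K)ᴴ * A ^ u 1 * T K * Z ^ u 2).trace.re ≤
      c ^ u 0 * (Kᴴ * A' ^ u 1 * K * Z' ^ u 2).trace.re} := by
  let e := unitaryCoord hA.1.eigenvectorUnitary hZ.1.eigenvectorUnitary
  let e' := unitaryCoord hA'.1.eigenvectorUnitary hZ'.1.eigenvectorUnitary
  convert convex_setOf_sum_prod_rpow_mul_norm_sq_le (e.toLinearMap ∘ₗ T ∘ₗ e'.symm.toLinearMap)
    (a := fun p => ![1, hA.1.eigenvalues p.1, hZ.1.eigenvalues p.2])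
    (b := fun p => ![c, hA'.1.eigenvalues p.1, hZ'.1.eigenvalues p.2]) ?_ ?_ using 1
  · ext u
    refine e'.toEquiv.forall_congr fun K => ?_
    rw [trace_conjTranspose_mul_rpow_mul_mul_rpow hA.posSemidef hZ.posSemidef,
      trace_conjTranspose_mul_rpow_mul_mul_rpow hA'.posSemidef hZ'.posSemidef, Finset.mul_sum]
    simp [Fin.prod_univ_three, e, e', mul_assoc]
  · simp [Fin.forall_fin_succ, hA.eigenvalues_pos, hZ.eigenvalues_pos]
  · simp [Fin.forall_fin_succ, hA'.eigenvalues_pos, hZ'.eigenvalues_pos, hc]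

theorem trace_conjTranspose_mul_rpow_mul_mul_rpow_le_of_endpoints
    (T : Matrix κ κ' ℂ →ₗ[ℂ] Matrix ι ι' ℂ)
    {A : Matrix ι ι ℂ} {Z : Matrix ι' ι' ℂ} {A' : Matrix κ κ ℂ} {Z' : Matrix κ' κ' ℂ}
    (hA : A.PosDef) (hZ : Z.PosDef) (hA' : A'.PosDef) (hZ' : Z'.PosDef) {c : ℝ} (hc : 0 < c)
    (h_one : ∀ K, ((T K)ᴴ * T K).trace.re ≤ c * (Kᴴ * K).trace.re)
    (h_left : ∀ K, ((T K)ᴴ * A * T K).trace.re ≤ (Kᴴ * A' * K).trace.re)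
    (h_right : ∀ K, ((T K)ᴴ * T K * Z).trace.re ≤ (Kᴴ * K * Z').trace.re)
    {s r : ℝ} (hs : 0 ≤ s) (hr : 0 ≤ r) (hsr : s + r ≤ 1) (K : Matrix κ κ' ℂ) :
    ((T K)ᴴ * A ^ s * T K * Z ^ r).trace.re ≤
      c ^ (1 - s - r) * (Kᴴ * A' ^ s * K * Z' ^ r).trace.re := by
  have hsub := convexHull_min (s := Set.range fun i j : Fin 3 => if i = j then (1 : ℝ) else 0) ?_
    (convex_setOf_trace_mul_rpow_le T hA hZ hA' hZ' hc)
  · rw [convexHull_basis_eq_stdSimplex] at hsub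
    refine @hsub ![1 - s - r, s, r] ⟨?_, ?_⟩ K
    · simpa [Fin.forall_fin_succ, hs, hr, sub_sub] using hsr
    · simp [Fin.sum_univ_three, sub_add]
  · rintro _ ⟨i, rfl⟩ L
    have hA₀ := hA.posSemidef.nonneg
    have hZ₀ := hZ.posSemidef.nonneg
    have hA'₀ := hA'.posSemidef.nonneg
    have hZ'₀ := hZ'.posSemidef.nonneg
    fin_cases i
    · simpa [CFC.rpow_zero, hA₀, hZ₀, hA'₀, hZ'₀] using h_one L
    · simpa [CFC.rpow_zero, CFC.rpow_one, hA₀, hZ₀, hA'₀, hZ'₀] using h_left L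
    · simpa [CFC.rpow_zero, CFC.rpow_one, hA₀, hZ₀, hA'₀, hZ'₀] using h_right L

end TraceInequality

section Variational

open scoped MatrixOrder

variable {ι : Type*} [Fintype ι] [DecidableEq ι] {X Z : Matrix ι ι ℂ} {q : ℝ}

lemma rpow_le_mul_add_mul {x z : ℝ} (hx : 0 ≤ x) (hz : 0 < z) (hq₀ : 0 < q) (hq₁ : q ≤ 1) :
    x ^ q ≤ q * (x * z ^ (1 - q⁻¹)) + (1 - q) * z := by
  have hz' := Real.rpow_nonneg hz.le (1 - q⁻¹)
  calc x ^ q = (x * z ^ (1 - q⁻¹)) ^ q * z ^ (1 - q) := by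
        rw [Real.mul_rpow hx hz', ← Real.rpow_mul hz.le, mul_assoc, ← Real.rpow_add hz]
        field_simp
        simp
    _ ≤ q * (x * z ^ (1 - q⁻¹)) + (1 - q) * z :=
        Real.geom_mean_le_arith_mean2_weighted hq₀.le (sub_nonneg.2 hq₁) (mul_nonneg hx hz') hz.le
          (by ring)

theorem trace_rpow_le_mul_trace_mul_rpow_add (hX : X.PosSemidef) (hZ : Z.PosDef) (hq₀ : 0 < q)
    (hq₁ : q ≤ 1) :
    (X ^ q).trace.re ≤ q * (X * Z ^ (1 - q⁻¹)).trace.re + (1 - q) * Z.trace.re := by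
  have h (s r : ℝ) :=
    trace_conjTranspose_mul_rpow_mul_mul_rpow hX hZ.posSemidef s r (1 : Matrix ι ι ℂ)
  have hXq := h q 0
  have hXZ := h 1 (1 - q⁻¹)
  have hZ₁ := h 0 1
  simp only [conjTranspose_one, CFC.rpow_zero X hX.nonneg,
    CFC.rpow_one X hX.nonneg, CFC.rpow_zero Z hZ.posSemidef.nonneg,
    CFC.rpow_one Z hZ.posSemidef.nonneg, Real.rpow_zero, Real.rpow_one, mul_one,
    one_mul] at hXq hXZ hZ₁
  rw [hXq, hXZ, hZ₁, Finset.mul_sum, Finset.mul_sum, ← Finset.sum_add_distrib]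
  refine Finset.sum_le_sum fun p _ => ?_
  have := mul_le_mul_of_nonneg_right (rpow_le_mul_add_mul (hX.eigenvalues_nonneg p.1)
    (hZ.eigenvalues_pos p.2) hq₀ hq₁)
    (sq_nonneg ‖unitaryCoord hX.1.eigenvectorUnitary hZ.1.eigenvectorUnitary 1 p‖)
  linarith

lemma mul_mul_rpow_add_rpow_le {x C δ : ℝ} (hx : 0 ≤ x) (hC : 0 < C) (hδ : 0 < δ) (hq₀ : 0 < q)
    (hq₁ : q ≤ 1) : C * (x * ((C * x) ^ q + δ) ^ (1 - q⁻¹)) ≤ (C * x) ^ q := by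
  obtain rfl | hx := hx.eq_or_lt
  · simp [hq₀.ne']
  have hq : 1 - q⁻¹ ≤ 0 := sub_nonpos.2 ((one_le_inv₀ hq₀).2 hq₁)
  have hCx : 0 < C * x := by positivity
  calc C * (x * ((C * x) ^ q + δ) ^ (1 - q⁻¹)) ≤ C * (x * ((C * x) ^ q) ^ (1 - q⁻¹)) := by
        gcongr 2
        exact Real.rpow_le_rpow_of_nonpos (by positivity) (by linarith) hq
    _ = (C * x) ^ q := by
        rw [← Real.rpow_mul hCx.le, ← mul_assoc, ← Real.rpow_one_add' hCx.le]
        · congr 1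
          field_simp
          ring
        · field_simp
          simp [hq₀.ne']

theorem exists_posDef_mul_trace_add_le (hX : X.PosSemidef) (hq₀ : 0 < q) (hq₁ : q ≤ 1)
    {C ε : ℝ} (hC : 0 < C) (hε : 0 < ε) :
    ∃ Z : Matrix ι ι ℂ, Z.PosDef ∧ q * (C * (X * Z ^ (1 - q⁻¹)).trace.re) + (1 - q) * Z.trace.re ≤
      C ^ q * (X ^ q).trace.re + ε := by
  obtain ⟨δ, hδ, hδε⟩ : ∃ δ : ℝ, 0 < δ ∧ Fintype.card ι * δ ≤ ε := by
    refine ⟨ε / (Fintype.card ι + 1), by positivity, ?_⟩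
    rw [mul_div_left_comm]
    exact mul_le_of_le_one_right hε.le (div_le_one_of_le₀ (by linarith) (by positivity))
  -- `Z = (C • X) ^ q` attains equality, but it may be singular: hence the shift by `δ`.
  let f (x : ℝ) : ℝ := (C * x) ^ q + δ
  have hcont (g : ℝ → ℝ) : ContinuousOn g (spectrum ℝ X) := X.finite_real_spectrum.continuousOn g
  have hsa : IsSelfAdjoint X := hX.1
  have hf : ∀ x ∈ spectrum ℝ X, 0 < f x := fun x hx => by
    have := spectrum_nonneg_of_nonneg hX.nonneg hx
    positivity
  have hZ : (cfc f X).PosDef :=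
    ((cfc_isStrictlyPositive_iff f X (hcont f) hsa).2 hf).posDef
  have hXZ : X * cfc f X ^ (1 - q⁻¹) = cfc (fun x => x * f x ^ (1 - q⁻¹)) X := by
    rw [CFC.rpow_eq_cfc_real hZ.posSemidef.nonneg, ← cfc_comp' (· ^ (1 - q⁻¹)) f X
      ((X.finite_real_spectrum.image f).continuousOn _) (hcont f) hsa,
      cfc_mul _ _ X (hcont _) (hcont _), cfc_id' ℝ X hsa]
  have h_trace : C * (X * cfc f X ^ (1 - q⁻¹)).trace.re ≤ C ^ q * (X ^ q).trace.re := by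
    rw [hXZ, trace_cfc hX.1, trace_rpow hX, Complex.ofReal_re, Complex.ofReal_re, Finset.mul_sum,
      Finset.mul_sum]
    refine Finset.sum_le_sum fun i _ => ?_
    have hi := hX.eigenvalues_nonneg i
    rw [← Real.mul_rpow hC.le hi]
    exact mul_mul_rpow_add_rpow_le hi hC hδ hq₀ hq₁
  have h_trace' : (cfc f X).trace.re ≤ C ^ q * (X ^ q).trace.re + ε := by
    rw [trace_cfc hX.1, trace_rpow hX, Complex.ofReal_re, Complex.ofReal_re, Finset.mul_sum,
      Finset.sum_add_distrib, Finset.sum_const, nsmul_eq_mul, Finset.card_univ]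
    refine add_le_add (Finset.sum_le_sum fun i _ => ?_) hδε
    rw [Real.mul_rpow hC.le (hX.eigenvalues_nonneg i)]
  refine ⟨cfc f X, hZ, ?_⟩
  nlinarith [sub_nonneg.2 hq₁]

end Variational

section Duality

open scoped MatrixOrder

variable {ι ι' κ κ' : Type*} [Fintype ι] [Fintype ι'] [Fintype κ] [Fintype κ']

lemma trace_mul_nonneg {X Y : Matrix ι ι ℂ} (hX : X.PosSemidef) (hY : Y.PosSemidef) :
    0 ≤ (X * Y).trace := by
  classical
  obtain ⟨K, rfl⟩ := CStarAlgebra.nonneg_iff_eq_star_mul_self.1 hX.nonneg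
  rw [Matrix.mul_assoc, trace_mul_comm]
  exact (hY.mul_mul_conjTranspose_same K).trace_nonneg

lemma trace_mul_re_le_trace_mul_re {X Y Y' : Matrix ι ι ℂ} (hX : X.PosSemidef)
    (hY : (Y' - Y).PosSemidef) : (X * Y).trace.re ≤ (X * Y').trace.re := by
  rw [← sub_nonneg, ← Complex.sub_re, ← trace_sub, ← Matrix.mul_sub]
  exact (Complex.le_def.1 (trace_mul_nonneg hX hY)).1

lemma two_mul_trace_conjTranspose_mul_mul_mul_le {P : Matrix ι ι ℂ} {Q : Matrix ι' ι' ℂ}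
    (hP : P.PosSemidef) (hQ : Q.PosSemidef) (X Y : Matrix ι ι' ℂ) :
    2 * (Xᴴ * P * Y * Q).trace.re ≤ (Xᴴ * P * X * Q).trace.re + (Yᴴ * P * Y * Q).trace.re := by
  have h_comm : (Yᴴ * P * X * Q).trace.re = (Xᴴ * P * Y * Q).trace.re := by
    rw [← Complex.conj_re, ← RCLike.star_def, ← trace_conjTranspose]
    simp only [conjTranspose_mul, conjTranspose_conjTranspose, hP.1.eq, hQ.1.eq]
    rw [trace_mul_comm, ← Matrix.mul_assoc]
  have h_pos := (Complex.le_def.1 (trace_mul_nonneg (hP.conjTranspose_mul_mul_same (X - Y)) hQ)).1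
  simp only [conjTranspose_sub, Matrix.mul_sub, Matrix.sub_mul, trace_sub, Complex.sub_re,
    Complex.zero_re] at h_pos
  linarith

variable [DecidableEq ι] [DecidableEq ι'] [DecidableEq κ] [DecidableEq κ']

lemma trace_conjTranspose_inv_mul_mul_inv_mul_mul_mul {P : Matrix ι ι ℂ} {Q : Matrix ι' ι' ℂ}
    (hP : P.PosDef) (hQ : Q.PosDef) (B X : Matrix ι ι' ℂ) :
    ((P⁻¹ * B * Q⁻¹)ᴴ * P * X * Q).trace = (Bᴴ * X).trace := by
  have := hP.isUnit.invertible
  have := hQ.isUnit.invertible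
  rw [trace_mul_comm]
  simp [conjTranspose_nonsing_inv, hP.1.eq, hQ.1.eq, Matrix.mul_assoc]

theorem trace_conjTranspose_mul_inv_mul_mul_inv_le (T : Matrix κ κ' ℂ →ₗ[ℂ] Matrix ι ι' ℂ)
    (S : Matrix ι ι' ℂ →ₗ[ℂ] Matrix κ κ' ℂ) (hTS : ∀ X Y, (Xᴴ * T Y).trace = ((S X)ᴴ * Y).trace)
    {P : Matrix ι ι ℂ} {Q : Matrix ι' ι' ℂ} {P' : Matrix κ κ ℂ} {Q' : Matrix κ' κ' ℂ}
    (hP : P.PosDef) (hQ : Q.PosDef) (hP' : P'.PosDef) (hQ' : Q'.PosDef) {C : ℝ} (hC : 0 < C)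
    (hT : ∀ K, ((T K)ᴴ * P * T K * Q).trace.re ≤ C * (Kᴴ * P' * K * Q').trace.re)
    (B : Matrix ι ι' ℂ) :
    ((S B)ᴴ * P'⁻¹ * S B * Q'⁻¹).trace.re ≤ C * (Bᴴ * P⁻¹ * B * Q⁻¹).trace.re := by
  let K := P'⁻¹ * S B * Q'⁻¹
  have hK : (S B)ᴴ * P'⁻¹ * S B * Q'⁻¹ = (S B)ᴴ * K := by simp only [K, Matrix.mul_assoc]
  have h := two_mul_trace_conjTranspose_mul_mul_mul_le hP.posSemidef hQ.posSemidef
    (C • (P⁻¹ * B * Q⁻¹)) (T K)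
  have hTK := hT K
  simp only [conjTranspose_smul, star_trivial, Matrix.smul_mul, Matrix.mul_smul, trace_smul,
    Complex.smul_re, smul_eq_mul, trace_conjTranspose_inv_mul_mul_inv_mul_mul_mul hP hQ, hTS] at h
  rw [trace_conjTranspose_inv_mul_mul_inv_mul_mul_mul hP' hQ'] at hTK
  simp only [← Matrix.mul_assoc] at h
  rw [hK]
  refine le_of_mul_le_mul_left ?_ hC
  linarith

end Duality

section SchwarzMap

open scoped MatrixOrder

variable {a b : ℕ} {Φ : Matrix (Fin a) (Fin a) ℂ →ₗ[ℂ] Matrix (Fin b) (Fin b) ℂ}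
  {Ψ : Matrix (Fin b) (Fin b) ℂ →ₗ[ℂ] Matrix (Fin a) (Fin a) ℂ}

lemma IsSchwarz.isPositiveMap (hΦ : IsSchwarz Φ) : IsPositiveMap Φ := fun X hX => by
  obtain ⟨K, rfl⟩ := CStarAlgebra.nonneg_iff_eq_star_mul_self.1 hX.nonneg
  simpa [star_eq_conjTranspose] using (hΦ K).add (posSemidef_conjTranspose_mul_self (Φ K))

open scoped Matrix.Norms.L2Operator in
lemma IsPositiveMap.map_conjTranspose (hΦ : IsPositiveMap Φ) (K : Matrix (Fin a) (Fin a) ℂ) :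
    Φ Kᴴ = (Φ K)ᴴ :=
  map_star (PositiveLinearMap.mk₀ Φ fun X hX => (hΦ X hX.posSemidef).nonneg) K

lemma IsPositiveMap.map_posDef (hΦ : IsPositiveMap Φ) (h₁ : (Φ 1).PosDef)
    {A : Matrix (Fin a) (Fin a) ℂ} (hA : A.PosDef) : (Φ A).PosDef := by
  obtain h | h := isEmpty_or_nonempty (Fin a)
  · rwa [Subsingleton.elim A 1]
  obtain ⟨ε, hε, hεA⟩ := (CFC.exists_pos_algebraMap_le_iff hA.1).2 fun x hx => by
    obtain ⟨i, rfl⟩ := hA.1.spectrum_real_eq_range_eigenvalues ▸ hx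
    exact hA.eigenvalues_pos i
  have hΦA := (h₁.smul hε).add_posSemidef (hΦ _ (le_iff.1 hεA))
  rw [map_sub, Algebra.algebraMap_eq_smul_one] at hΦA
  simpa using hΦA

lemma IsHSAdjoint.trace_mul_map (h : IsHSAdjoint Φ Ψ) (hΦ : IsPositiveMap Φ)
    (X : Matrix (Fin b) (Fin b) ℂ) (K : Matrix (Fin a) (Fin a) ℂ) :
    (X * Φ K).trace = (Ψ X * K).trace := by
  have := congrArg star (h X Kᴴ)
  rw [← trace_conjTranspose, ← trace_conjTranspose] at this
  simpa [hΦ.map_conjTranspose, trace_mul_comm (Φ K), trace_mul_comm K] using this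

lemma IsHSAdjoint.isPositiveMap (h : IsHSAdjoint Φ Ψ) (hΦ : IsPositiveMap Φ) :
    IsPositiveMap Ψ := fun X hX => by
  refine .of_dotProduct_mulVec_nonneg ?_ fun v => ?_
  · refine ext_iff_trace_mul_right.2 fun K => ?_
    rw [← h, hX.1.eq, h.trace_mul_map hΦ]
  · have := trace_mul_nonneg hX (hΦ _ (posSemidef_vecMulVec_self_star v))
    rwa [h.trace_mul_map hΦ, mul_vecMulVec, trace_vecMulVec, dotProduct_comm] at this

lemma IsSchwarz.posSemidef_one_sub_map_one (hΦ : IsSchwarz Φ) : (1 - Φ 1).PosSemidef := by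
  have hΦ₁ : (Φ 1)ᴴ = Φ 1 := by rw [← hΦ.isPositiveMap.map_conjTranspose, conjTranspose_one]
  have h := (hΦ 1).add (posSemidef_conjTranspose_mul_self (1 - Φ 1))
  convert h using 1
  simp only [conjTranspose_one, Matrix.one_mul, conjTranspose_sub, hΦ₁]
  noncomm_ring

lemma IsSchwarz.trace_adjoint_le (hΦ : IsSchwarz Φ) (h : IsHSAdjoint Φ Ψ)
    {Z : Matrix (Fin b) (Fin b) ℂ} (hZ : Z.PosSemidef) : (Ψ Z).trace.re ≤ Z.trace.re := by
  simpa [h.trace_mul_map hΦ.isPositiveMap] using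
    trace_mul_re_le_trace_mul_re hZ hΦ.posSemidef_one_sub_map_one

lemma IsSchwarz.trace_conjTranspose_mul_self_mul_le (hΦ : IsSchwarz Φ) (h : IsHSAdjoint Φ Ψ)
    {Z : Matrix (Fin b) (Fin b) ℂ} (hZ : Z.PosSemidef) (K : Matrix (Fin a) (Fin a) ℂ) :
    ((Φ K)ᴴ * Φ K * Z).trace.re ≤ (Kᴴ * K * Ψ Z).trace.re := by
  rw [trace_mul_comm, trace_mul_comm (Kᴴ * K), ← h.trace_mul_map hΦ.isPositiveMap]
  exact trace_mul_re_le_trace_mul_re hZ (hΦ K)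

theorem IsSchwarz.trace_conjTranspose_mul_rpow_mul_mul_rpow_le (hΦ : IsSchwarz Φ)
    (h : IsHSAdjoint Φ Ψ) {c : ℝ} (hc : 0 < c) (h₁ : (Ψ 1).PosDef)
    (h₁c : ((c : ℂ) • 1 - Ψ 1).PosSemidef) {A Z : Matrix (Fin b) (Fin b) ℂ} (hA : A.PosDef)
    (hZ : Z.PosDef) {s r : ℝ} (hs : 0 ≤ s) (hr : 0 ≤ r) (hsr : s + r ≤ 1)
    (K : Matrix (Fin a) (Fin a) ℂ) :
    ((Φ K)ᴴ * A ^ s * Φ K * Z ^ r).trace.re ≤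
      c ^ (1 - s - r) * (Kᴴ * Ψ A ^ s * K * Ψ Z ^ r).trace.re := by
  have hΨ := h.isPositiveMap hΦ.isPositiveMap
  refine trace_conjTranspose_mul_rpow_mul_mul_rpow_le_of_endpoints Φ hA hZ (hΨ.map_posDef h₁ hA)
    (hΨ.map_posDef h₁ hZ) hc (fun L => ?_) (fun L => ?_)
    (hΦ.trace_conjTranspose_mul_self_mul_le h hZ.posSemidef) hs hr hsr K
  · calc ((Φ L)ᴴ * Φ L).trace.re ≤ (Lᴴ * L * Ψ 1).trace.re := by
          simpa using hΦ.trace_conjTranspose_mul_self_mul_le h .one L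
      _ ≤ (Lᴴ * L * (c : ℂ) • 1).trace.re :=
          trace_mul_re_le_trace_mul_re (posSemidef_conjTranspose_mul_self L) h₁c
      _ = c * (Lᴴ * L).trace.re := by simp
  · have h_le := hΦ.trace_conjTranspose_mul_self_mul_le h hA.posSemidef Lᴴ
    rw [trace_mul_cycle, trace_mul_cycle Lᴴ]
    simpa [hΦ.isPositiveMap.map_conjTranspose] using h_le

theorem IsSchwarz.trace_adjoint_mul_rpow_neg_le (hΦ : IsSchwarz Φ) (h : IsHSAdjoint Φ Ψ)
    {c : ℝ} (hc : 0 < c) (h₁ : (Ψ 1).PosDef) (h₁c : ((c : ℂ) • 1 - Ψ 1).PosSemidef)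
    {A Z : Matrix (Fin b) (Fin b) ℂ} (hA : A.PosDef) (hZ : Z.PosDef) {s r : ℝ} (hs : 0 ≤ s)
    (hr : 0 ≤ r) (hsr : s + r ≤ 1) (B : Matrix (Fin b) (Fin b) ℂ) :
    ((Ψ B)ᴴ * Ψ A ^ (-s) * Ψ B * Ψ Z ^ (-r)).trace.re ≤
      c ^ (1 - s - r) * (Bᴴ * A ^ (-s) * B * Z ^ (-r)).trace.re := by
  have hΨ := h.isPositiveMap hΦ.isPositiveMap
  have hΨA := hΨ.map_posDef h₁ hA
  have hΨZ := hΨ.map_posDef h₁ hZ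
  simpa only [inv_rpow hA, inv_rpow hZ, inv_rpow hΨA, inv_rpow hΨZ] using
    trace_conjTranspose_mul_inv_mul_mul_inv_le Φ Ψ h (posDef_rpow hA s) (posDef_rpow hZ r)
      (posDef_rpow hΨA s) (posDef_rpow hΨZ r) (Real.rpow_pos_of_pos hc _)
      (hΦ.trace_conjTranspose_mul_rpow_mul_mul_rpow_le h hc h₁ h₁c hA hZ hs hr hsr) B

end SchwarzMap

open scoped MatrixOrder in
theorem stmt17_general {m n : ℕ} {s q c : ℝ} (hs₀ : 0 ≤ s) (hs₁ : s ≤ 1) (hq₀ : 1 / (2 - s) ≤ q)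
    (hq₁ : q ≤ 1) (hc : 0 < c) {Φ : Matrix (Fin m) (Fin m) ℂ →ₗ[ℂ] Matrix (Fin n) (Fin n) ℂ}
    {Ψ : Matrix (Fin n) (Fin n) ℂ →ₗ[ℂ] Matrix (Fin m) (Fin m) ℂ} (hΦ : IsSchwarz Φ)
    (hadj : IsHSAdjoint Φ Ψ) (h₁ : (Ψ 1).PosDef) (h₁c : ((c : ℂ) • 1 - Ψ 1).PosSemidef)
    {A : Matrix (Fin n) (Fin n) ℂ} (hA : A.PosDef) (B : Matrix (Fin n) (Fin n) ℂ) :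
    (mpow ((Ψ B)ᴴ * mpow (Ψ A) (-s) * Ψ B) q).trace.re ≤
      c ^ ((2 - s) * q - 1) * (mpow (Bᴴ * mpow A (-s) * B) q).trace.re := by
  have hq : 0 < q := (one_div_pos.2 (by linarith)).trans_le hq₀
  have hr : 0 ≤ q⁻¹ - 1 := sub_nonneg.2 ((one_le_inv₀ hq).2 hq₁)
  have hsr : s + (q⁻¹ - 1) ≤ 1 := by
    have := inv_anti₀ (one_div_pos.2 (by linarith)) hq₀
    rw [one_div, inv_inv] at this
    linarith
  have hΨ := hadj.isPositiveMap hΦ.isPositiveMap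
  have hΨA := hΨ.map_posDef h₁ hA
  have hX := (posDef_rpow hA (-s)).posSemidef.conjTranspose_mul_mul_same B
  have hY := (posDef_rpow hΨA (-s)).posSemidef.conjTranspose_mul_mul_same (Ψ B)
  rw [mpow_eq_rpow hA.posSemidef, mpow_eq_rpow hΨA.posSemidef, mpow_eq_rpow hX, mpow_eq_rpow hY]
  set C := c ^ (1 - s - (q⁻¹ - 1)) with hC
  have hCq : C ^ q = c ^ ((2 - s) * q - 1) := by
    rw [hC, ← Real.rpow_mul hc.le]
    congr 1
    field_simp
    ring
  refine le_of_forall_pos_le_add fun ε hε => ?_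
  obtain ⟨Z, hZ, hZε⟩ := exists_posDef_mul_trace_add_le hX hq hq₁ (Real.rpow_pos_of_pos hc _) hε
  have hdual := hΦ.trace_adjoint_mul_rpow_neg_le hadj hc h₁ h₁c hA hZ hs₀ hr hsr B
  rw [neg_sub] at hdual
  calc (((Ψ B)ᴴ * Ψ A ^ (-s) * Ψ B) ^ q).trace.re
      ≤ q * ((Ψ B)ᴴ * Ψ A ^ (-s) * Ψ B * Ψ Z ^ (1 - q⁻¹)).trace.re + (1 - q) * (Ψ Z).trace.re :=
        trace_rpow_le_mul_trace_mul_rpow_add hY (hΨ.map_posDef h₁ hZ) hq hq₁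
    _ ≤ q * (C * (Bᴴ * A ^ (-s) * B * Z ^ (1 - q⁻¹)).trace.re) + (1 - q) * Z.trace.re := by
        have := hΦ.trace_adjoint_le hadj hZ.posSemidef
        gcongr
    _ ≤ c ^ ((2 - s) * q - 1) * ((Bᴴ * A ^ (-s) * B) ^ q).trace.re + ε := hCq ▸ hZε

theorem stmt17 {m n : ℕ} (hm : 0 < m) (s q : ℝ) (hs0 : 0 ≤ s) (hs1 : s < 1)
    (hq0 : 1 / (2 - s) ≤ q) (hq1 : q < 1)
    (Φ : Matrix (Fin m) (Fin m) ℂ →ₗ[ℂ] Matrix (Fin n) (Fin n) ℂ)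
    (Ψ : Matrix (Fin n) (Fin n) ℂ →ₗ[ℂ] Matrix (Fin m) (Fin m) ℂ)
    (hΦ : IsSchwarz Φ) (hadj : IsHSAdjoint Φ Ψ)
    (hunital : Φ 1 = 1) (hsemi : Ψ 1 = (((n : ℝ) / m : ℝ) : ℂ) • 1)
    (A : Matrix (Fin n) (Fin n) ℂ) (hA : A.PosDef)
    (B : Matrix (Fin n) (Fin n) ℂ) (hB : IsUnit B) :
    ((n : ℝ) / m) ^ ((2 - s) * q - 1) * (mpow (Bᴴ * mpow A (-s) * B) q).trace.re ≥
      (mpow ((Ψ B)ᴴ * mpow (Ψ A) (-s) * Ψ B) q).trace.re := by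
  obtain rfl | hn := n.eq_zero_or_pos
  · have hB₀ : B = 0 := Subsingleton.elim _ _
    have hq : q ≠ 0 := ((one_div_pos.2 (by linarith)).trans_le hq0).ne'
    simp [hB₀, zero_mpow hq]
  have hc : 0 < (n : ℝ) / m := by positivity
  refine stmt17_general hs0 hs1.le hq0 hq1.le hc hΦ hadj ?_ ?_ hA B
  · rw [hsemi]
    exact PosDef.one.smul (by exact_mod_cast hc)
  · rw [hsemi, sub_self]
    exact .zero
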